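/- Let G=(V,E) be a finite undirected graph with m = |E| ≥ 1 edges, let ε > 0, and let w⁻, w⁺ be edge-weight vectors with 0 ≤ w⁻ₑ ≤ w⁺ₑ for every e ∈ E. Suppose that ‖w⁺ − w⁻‖_∞ ≤ √(2/m) · ε · D, where D is a real number with 0 < D ≤ max over nonempty S ⊆ V of f_{w⁺}(S). Let S⁺ be a densest subgraph with respect to w⁺. Then f_{w⁻}(S⁺) ≥ (1 − ε) · f_{w⁺}(S⁺). -/

import Mathlib

open Finset
open scoped Classical

/-- The set of edges of `G` whose both endpoints lie in `S`, i.e. `E(S)`. -/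
noncomputable def edgesIn {V : Type*} [Fintype V] (G : SimpleGraph V) (S : Finset V) :
    Finset (Sym2 V) :=
  G.edgeFinset.filter (fun e => ∀ v ∈ e, v ∈ S)

/-- The density `f_w(S) = w(S) / |S|` of the subgraph induced by `S`. -/
noncomputable def density {V : Type*} [Fintype V] (G : SimpleGraph V) (w : Sym2 V → ℝ)
    (S : Finset V) : ℝ :=
  (∑ e ∈ edgesIn G S, w e) / (S.card : ℝ)

/-!
Lowering every weight by at most `δ` costs `S` at most `δ |E(S)| / |S|` in density. Since `|E(S)|`
is bounded both by `m` and by `|S|² / 2`, we have `|E(S)|² ≤ m |S|² / 2`, that is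
`|E(S)| √(2/m) ≤ |S|`. So `δ = √(2/m) ε D` costs at most `ε D`, which is at most `ε f_{w⁺}(S)`
as soon as `D ≤ f_{w⁺}(S)`.
-/

section

variable {V : Type*} [Fintype V] (G : SimpleGraph V)

theorem edgesIn_subset_edgeFinset (S : Finset V) : edgesIn G S ⊆ G.edgeFinset :=
  filter_subset _ _

theorem edgesIn_subset_image_offDiag (S : Finset V) :
    edgesIn G S ⊆ S.offDiag.image Sym2.mk.uncurry := by
  intro e he
  induction e with
  | _ x y =>
    simp only [edgesIn, mem_filter, SimpleGraph.mem_edgeFinset, SimpleGraph.mem_edgeSet,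
      Sym2.ball] at he
    obtain ⟨hadj, hx, hy⟩ := he
    exact mem_image.2 ⟨(x, y), mem_offDiag.2 ⟨hx, hy, hadj.ne⟩, rfl⟩

theorem card_edgesIn_le_choose_two (S : Finset V) : #(edgesIn G S) ≤ (#S).choose 2 :=
  (card_le_card (edgesIn_subset_image_offDiag G S)).trans_eq (Sym2.card_image_offDiag S)

theorem two_mul_card_edgesIn_le_sq (S : Finset V) : 2 * (#(edgesIn G S) : ℝ) ≤ (#S : ℝ) ^ 2 := by
  have hchoose : (#(edgesIn G S) : ℝ) ≤ (#S).choose 2 :=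
    mod_cast card_edgesIn_le_choose_two G S
  have hpow : ((#S).choose 2 : ℝ) ≤ (#S : ℝ) ^ 2 / 2 := by
    simpa using Nat.choose_le_pow_div (α := ℝ) 2 #S
  linarith

theorem card_edgesIn_mul_sqrt_le_card (S : Finset V) :
    #(edgesIn G S) * √(2 / #G.edgeFinset) ≤ #S := by
  have hratio : (#(edgesIn G S) : ℝ) / #G.edgeFinset ≤ 1 :=
    div_le_one_of_le₀ (mod_cast card_le_card (edgesIn_subset_edgeFinset G S)) (Nat.cast_nonneg _)
  refine le_of_sq_le_sq ?_ (Nat.cast_nonneg _)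
  calc (#(edgesIn G S) * √(2 / #G.edgeFinset)) ^ 2
      = 2 * #(edgesIn G S) * (#(edgesIn G S) / #G.edgeFinset) := by
        rw [mul_pow, Real.sq_sqrt (by positivity)]
        ring
    _ ≤ 2 * #(edgesIn G S) := mul_le_of_le_one_right (by positivity) hratio
    _ ≤ (#S : ℝ) ^ 2 := two_mul_card_edgesIn_le_sq G S

variable {G} {S : Finset V}

theorem density_sub (w w' : Sym2 V → ℝ) :
    density G (w - w') S = density G w S - density G w' S := by
  simp only [density, Pi.sub_apply, sum_sub_distrib, sub_div]

theorem density_le_of_forall_le_sqrt_mul {w : Sym2 V → ℝ} {c : ℝ} (hS : S.Nonempty) (hc : 0 ≤ c)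
    (hw : ∀ e ∈ edgesIn G S, w e ≤ √(2 / #G.edgeFinset) * c) : density G w S ≤ c := by
  rw [density, div_le_iff₀ (mod_cast hS.card_pos)]
  calc ∑ e ∈ edgesIn G S, w e
      ≤ #(edgesIn G S) * (√(2 / #G.edgeFinset) * c) := by
        simpa only [nsmul_eq_mul] using sum_le_card_nsmul _ _ _ hw
    _ = #(edgesIn G S) * √(2 / #G.edgeFinset) * c := (mul_assoc _ _ _).symm
    _ ≤ #S * c := mul_le_mul_of_nonneg_right (card_edgesIn_mul_sqrt_le_card G S) hc
    _ = c * #S := mul_comm _ _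

theorem densest_upper_lower_close_general {ε D : ℝ} (hε : 0 ≤ ε) (hD : 0 ≤ D)
    {wm wp : Sym2 V → ℝ} (hS : S.Nonempty) (hDS : D ≤ density G wp S)
    (hdiff : ∀ e ∈ edgesIn G S, wp e - wm e ≤ √(2 / #G.edgeFinset) * ε * D) :
    (1 - ε) * density G wp S ≤ density G wm S := by
  have hloss : density G wp S - density G wm S ≤ ε * D := by
    rw [← density_sub]
    refine density_le_of_forall_le_sqrt_mul hS (mul_nonneg hε hD) fun e he => ?_
    simpa only [Pi.sub_apply, mul_assoc] using hdiff e he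
  have hgain : ε * D ≤ ε * density G wp S := mul_le_mul_of_nonneg_left hDS hε
  linarith

end

/-- Suppose `m = |E| ≥ 1`, `ε > 0`, `0 ≤ w⁻ ≤ w⁺` edgewise, and
`‖w⁺ − w⁻‖_∞ ≤ √(2/m) · ε · D`, where `0 < D` and `D` is at most the optimal density
with respect to `w⁺` (witnessed by some nonempty subset). If `S⁺` is a densest subgraph
with respect to `w⁺`, then `f_{w⁻}(S⁺) ≥ (1 − ε) · f_{w⁺}(S⁺)`. -/
theorem densest_upper_lower_close {V : Type*} [Fintype V] (G : SimpleGraph V)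
    (hm : 1 ≤ G.edgeFinset.card) (ε : ℝ) (hε : 0 < ε)
    (wm wp : Sym2 V → ℝ)
    (hw : ∀ e ∈ G.edgeFinset, 0 ≤ wm e ∧ wm e ≤ wp e)
    (D : ℝ) (hD : 0 < D)
    (hDle : ∃ S : Finset V, S.Nonempty ∧ D ≤ density G wp S)
    (hdiff : ∀ e ∈ G.edgeFinset,
      |wp e - wm e| ≤ Real.sqrt (2 / (G.edgeFinset.card : ℝ)) * ε * D)
    (Sp : Finset V) (hSp : Sp.Nonempty)
    (hSpOpt : ∀ T : Finset V, T.Nonempty → density G wp T ≤ density G wp Sp) :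
    (1 - ε) * density G wp Sp ≤ density G wm Sp := by
  obtain ⟨S, hS, hDS⟩ := hDle
  exact densest_upper_lower_close_general hε.le hD.le hSp (hDS.trans (hSpOpt S hS)) fun e he =>
    (le_abs_self _).trans (hdiff e (edgesIn_subset_edgeFinset G Sp he))
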